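/- Let G be a finite abelian group with exp(G) = n and r(G) = r ≥ n, and let G₀ ⊆ G be a minimal non-half-factorial set with min Δ(G₀) = max Δ*(G). Then G₀ is an LCN-set, |G₀| = r + 1, and for every h ∈ G₀ and every h' ∈ G₀ \ {h}, one has h ∉ ⟨G₀ \ {h, h'}⟩. -/

import Mathlib

open Multiset

section Defs

variable {G : Type*} [AddCommGroup G]

/-- `S` is a zero-sum sequence over `G₀`: a multiset with entries in `G₀` and sum `0`. -/
def IsZeroSumSeq (G₀ : Set G) (S : Multiset G) : Prop :=
  (∀ x ∈ S, x ∈ G₀) ∧ S.sum = 0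

/-- `S` is an atom over `G₀`: a nonempty zero-sum sequence over `G₀` that is not the
union of two nonempty zero-sum sequences over `G₀`. -/
def IsAtomSeq (G₀ : Set G) (S : Multiset G) : Prop :=
  IsZeroSumSeq G₀ S ∧ S ≠ 0 ∧
    ∀ A B : Multiset G, IsZeroSumSeq G₀ A → IsZeroSumSeq G₀ B →
      A ≠ 0 → B ≠ 0 → S ≠ A + B

/-- The set of lengths of `B`: all `k` such that `B` is a union of `k` atoms over `G₀`. -/
def LengthSet (G₀ : Set G) (B : Multiset G) : Set ℕ :=
  {k | ∃ l : Multiset (Multiset G), Multiset.card l = k ∧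
      (∀ A ∈ l, IsAtomSeq G₀ A) ∧ l.sum = B}

/-- The set of successive distances of a set of naturals. -/
def DeltaOf (L : Set ℕ) : Set ℕ :=
  {d | ∃ x ∈ L, ∃ y ∈ L, x < y ∧ y - x = d ∧ ∀ z ∈ L, ¬(x < z ∧ z < y)}

/-- The set of distances `Δ(G₀)`. -/
def DeltaSet (G₀ : Set G) : Set ℕ :=
  {d | ∃ B : Multiset G, IsZeroSumSeq G₀ B ∧ B ≠ 0 ∧ d ∈ DeltaOf (LengthSet G₀ B)}

/-- `G₀` is half-factorial if `Δ(G₀) = ∅`. -/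
def IsHalfFactorialSet (G₀ : Set G) : Prop := DeltaSet G₀ = ∅

/-- `G₀` is minimal non-half-factorial if `Δ(G₀) ≠ ∅` and every proper subset is
half-factorial. -/
def IsMinNonHalfFactorial (G₀ : Set G) : Prop :=
  (DeltaSet G₀).Nonempty ∧ ∀ G₁ : Set G, G₁ ⊂ G₀ → DeltaSet G₁ = ∅

/-- The cross number `k(S) = Σ 1/ord(g)` of a multiset over `G`. -/
noncomputable def crossNumber (S : Multiset G) : ℚ :=
  (S.map (fun g => ((addOrderOf g : ℚ))⁻¹)).sum

/-- `G₀` is an LCN-set if every atom over `G₀` has cross number at least 1. -/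
def IsLCNSet (G₀ : Set G) : Prop :=
  ∀ U : Multiset G, IsAtomSeq G₀ U → 1 ≤ crossNumber U

/-- A subset of `G \ {0}` is independent if any integral linear relation on its elements
has all summands zero. -/
def IsIndependentSet (E : Set G) : Prop :=
  (0 : G) ∉ E ∧ ∀ s : Finset G, ↑s ⊆ E → ∀ f : G → ℤ,
    (∑ e ∈ s, f e • e) = 0 → ∀ e ∈ s, f e • e = 0

/-- `d` is a greatest common divisor of the set `S` of naturals. -/
def IsSetGcd (S : Set ℕ) (d : ℕ) : Prop :=
  (∀ s ∈ S, d ∣ s) ∧ ∀ e : ℕ, (∀ s ∈ S, e ∣ s) → e ∣ d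

end Defs

/-- The set of minimal distances `Δ*(G)`. -/
def DeltaStar (G : Type*) [AddCommGroup G] : Set ℕ :=
  {d | ∃ G₀ : Set G, (DeltaSet G₀).Nonempty ∧ d = sInf (DeltaSet G₀)}

/-- The `p`-rank of a finite abelian group: `log_p` of the order of the `p`-torsion
subgroup `{x | p • x = 0}`. -/
noncomputable def pRank (G : Type*) [AddCommGroup G] (p : ℕ) : ℕ :=
  Nat.log p (Nat.card {x : G // p • x = 0})

/-- The rank of a finite abelian group: the maximum of the `p`-ranks over all primes. -/
noncomputable def rankG (G : Type*) [AddCommGroup G] : ℕ :=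
  sSup {r : ℕ | ∃ p : ℕ, p.Prime ∧ r = pRank G p}

/-!
Write `r = rankG G` and let `p` be a prime with `pRank G p = r`. For independent elements
`e₁, …, e_r` of order `p`, all distances of `{e₁, …, e_r, e₁ + ⋯ + e_r}` are multiples of `r - 1`.
Hence `max Δ*(G) ≥ r - 1`, and the hypotheses give `exp(G) ≤ min Δ(G₀) + 1`. So, of two factorizations
of the same sequence, one of length at least two and one of length at most `exp(G)`, the latter is
not longer than the former.

This makes `G₀` an LCN-set. Replacing an atom `Z` of cross number one in a product of such atoms
involves at most `card Z ≤ exp(G)` factors, so the monoid generated by these atoms is cancellative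
in the strong sense that `S` and `S + B` in it imply `B` in it. Consequently an atom of cross number
different from one, which exists since `G₀` is not half-factorial, lies outside the lattice `Λ`
spanned by the atoms of cross number one. On the other hand, proper subsets of `G₀` are
half-factorial, so every integral relation between elements of `G₀` in which some coefficient
vanishes lies in `Λ`.

* If `h ∈ ⟨G₀ \ {h, h'}⟩`, subtracting multiples of a relation with coefficient `1` at `h` and `0`
  at `h'` would put all relations in `Λ`.
* A nonzero character modulo a prime `q`, trivial on `Λ`, of the lattice of relations and a relation
  `w` outside its kernel make the elements `w g • g` with `g ∈ G₀ \ {o}` independent modulo `q`, so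
  that `|G₀| - 1 ≤ r`.
* The sum of the sequences `g, …, g` (`ord(g)` times) over `g ∈ G₀` contains every atom. If `|G₀|`
  were at most `min Δ(G₀) + 1`, every atom would have cross number one; so `|G₀| ≥ r + 1`.
-/

section Factorizations

variable {G : Type*} [AddCommGroup G] {E G₀ : Set G} {A B S T U : Multiset G}
  {l l' : Multiset (Multiset G)} {g : G}

namespace IsZeroSumSeq

theorem zero : IsZeroSumSeq G₀ 0 :=
  ⟨fun _ hx => absurd hx (notMem_zero _), sum_zero⟩

theorem add (hS : IsZeroSumSeq G₀ S) (hT : IsZeroSumSeq G₀ T) : IsZeroSumSeq G₀ (S + T) :=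
  ⟨fun x hx => (mem_add.1 hx).elim (hS.1 x) (hT.1 x), by rw [sum_add, hS.2, hT.2, add_zero]⟩

theorem of_add_left (hST : IsZeroSumSeq G₀ (S + T)) (hS : IsZeroSumSeq G₀ S) :
    IsZeroSumSeq G₀ T :=
  ⟨fun x hx => hST.1 x (mem_add.2 (.inr hx)), by simpa [hS.2] using hST.2⟩

theorem mono (h : E ⊆ G₀) (hS : IsZeroSumSeq E S) : IsZeroSumSeq G₀ S :=
  ⟨fun x hx => h (hS.1 x hx), hS.2⟩

theorem of_le (hS : IsZeroSumSeq E S) (hTS : T ≤ S) (hT : IsZeroSumSeq G₀ T) :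
    IsZeroSumSeq E T :=
  ⟨fun x hx => hS.1 x (mem_of_le hTS hx), hT.2⟩

end IsZeroSumSeq

theorem isAtomSeq_iff_forall_le :
    IsAtomSeq G₀ U ↔
      IsZeroSumSeq G₀ U ∧ U ≠ 0 ∧ ∀ A ≤ U, IsZeroSumSeq G₀ A → A ≠ 0 → A = U := by
  refine and_congr_right fun hU => and_congr_right fun _ => ⟨fun h A hAU hA hA0 => ?_, ?_⟩
  · obtain ⟨B, rfl⟩ := Multiset.le_iff_exists_add.1 hAU
    by_contra hne
    exact h A B hA (hU.of_add_left hA) hA0 (fun hB => hne (by rw [hB, add_zero])) rfl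
  · rintro h A B hA - hA0 hB0 rfl
    exact hB0 (left_eq_add.1 (h A (Multiset.le_add_right A B) hA hA0))

namespace IsAtomSeq

theorem eq_of_le (hU : IsAtomSeq G₀ U) (hAU : A ≤ U) (hA : IsZeroSumSeq G₀ A) (hA0 : A ≠ 0) :
    A = U :=
  (isAtomSeq_iff_forall_le.1 hU).2.2 A hAU hA hA0

theorem mono (h : E ⊆ G₀) (hU : IsAtomSeq E U) : IsAtomSeq G₀ U :=
  isAtomSeq_iff_forall_le.2 ⟨hU.1.mono h, hU.2.1, fun _ hAU hA hA0 =>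
    hU.eq_of_le hAU (hU.1.of_le hAU hA) hA0⟩

end IsAtomSeq

theorem isAtomSeq_replicate_addOrderOf (hg : g ∈ G₀) (hfin : IsOfFinAddOrder g) :
    IsAtomSeq G₀ (replicate (addOrderOf g) g) := by
  refine isAtomSeq_iff_forall_le.2 ⟨⟨fun x hx => eq_of_mem_replicate hx ▸ hg, ?_⟩, ?_, ?_⟩
  · rw [sum_replicate, addOrderOf_nsmul_eq_zero]
  · exact fun h => hfin.addOrderOf_pos.ne' (by simpa using congrArg card h)
  · intro A hA hA' hA0
    obtain ⟨m, hm, rfl⟩ := Multiset.le_replicate_iff.1 hA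
    have hdvd : addOrderOf g ∣ m := addOrderOf_dvd_of_nsmul_eq_zero (by simpa using hA'.2)
    have hm0 : m ≠ 0 := fun h => hA0 (by rw [h, replicate_zero])
    rw [hm.antisymm (Nat.le_of_dvd hm0.bot_lt hdvd)]

theorem IsAtomSeq.count_le_addOrderOf [DecidableEq G] (hU : IsAtomSeq G₀ U) (hg : g ∈ G₀)
    (hfin : IsOfFinAddOrder g) : U.count g ≤ addOrderOf g := by
  by_contra! hlt
  have hatom := isAtomSeq_replicate_addOrderOf hg hfin
  have hU' := hU.eq_of_le (le_count_iff_replicate_le.1 hlt.le) hatom.1 hatom.2.1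
  simp [← hU'] at hlt

/-- `l` is a factorization of the sequence `B` into atoms over `G₀`. The multiset `l` records the
atoms up to order, so `card l` is the length of the factorization. -/
def IsFactorization (G₀ : Set G) (B : Multiset G) (l : Multiset (Multiset G)) : Prop :=
  (∀ A ∈ l, IsAtomSeq G₀ A) ∧ l.sum = B

namespace IsFactorization

theorem cons (hA : IsAtomSeq G₀ A) (hl : IsFactorization G₀ B l) :
    IsFactorization G₀ (A + B) (A ::ₘ l) :=
  ⟨forall_mem_cons.2 ⟨hA, hl.1⟩, by rw [sum_cons, hl.2]⟩

theorem add (hl : IsFactorization G₀ A l) (hl' : IsFactorization G₀ B l') :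
    IsFactorization G₀ (A + B) (l + l') :=
  ⟨fun C hC => (mem_add.1 hC).elim (hl.1 C) (hl'.1 C), by rw [sum_add, hl.2, hl'.2]⟩

theorem isZeroSumSeq (hl : IsFactorization G₀ B l) : IsZeroSumSeq G₀ B :=
  hl.2 ▸ Multiset.sum_induction (IsZeroSumSeq G₀) l (fun _ _ => .add) .zero
    fun A hA => (hl.1 A hA).1

theorem ne_zero (hl : IsFactorization G₀ B l) (hl0 : l ≠ 0) : B ≠ 0 := by
  obtain ⟨A, hA⟩ := exists_mem_of_ne_zero hl0
  have hAB : A ≤ B := hl.2 ▸ le_sum_of_mem hA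
  exact fun hB => (hl.1 A hA).2.1 (Multiset.le_zero.1 (hB ▸ hAB))

end IsFactorization

theorem IsAtomSeq.isFactorization_replicate (hU : IsAtomSeq G₀ U) (n : ℕ) :
    IsFactorization G₀ (n • U) (replicate n U) :=
  ⟨fun _ hA => eq_of_mem_replicate hA ▸ hU, sum_replicate n U⟩

theorem IsZeroSumSeq.exists_isFactorization (hB : IsZeroSumSeq G₀ B) :
    ∃ l, IsFactorization G₀ B l := by
  induction B using Multiset.strongInductionOn with | ih B ih =>
  by_cases hB0 : B = 0
  · exact ⟨0, by simp, by simp [hB0]⟩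
  by_cases hatom : IsAtomSeq G₀ B
  · exact ⟨{B}, by simpa using hatom, sum_singleton B⟩
  obtain ⟨A, C, hA, hC, hA0, hC0, rfl⟩ : ∃ A C, IsZeroSumSeq G₀ A ∧ IsZeroSumSeq G₀ C ∧
      A ≠ 0 ∧ C ≠ 0 ∧ B = A + C := by
    simpa [IsAtomSeq, hB, hB0] using hatom
  obtain ⟨l, hl⟩ := ih A (lt_add_of_pos_right A (pos_iff_ne_zero.2 hC0)) hA
  obtain ⟨l', hl'⟩ := ih C (lt_add_of_pos_left C (pos_iff_ne_zero.2 hA0)) hC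
  exact ⟨l + l', hl.add hl'⟩

theorem exists_mem_deltaOf_le {L : Set ℕ} {x y : ℕ} (hx : x ∈ L) (hy : y ∈ L) (hxy : x < y) :
    ∃ d ∈ DeltaOf L, d ≤ y - x := by
  have hne : {z ∈ L | x < z}.Nonempty := ⟨y, hy, hxy⟩
  obtain ⟨z, ⟨hzL, hxz⟩, hmin⟩ : ∃ z, IsLeast {z ∈ L | x < z} z :=
    ⟨_, Nat.sInf_mem hne, fun _ hw => Nat.sInf_le hw⟩
  exact ⟨z - x, ⟨x, hx, z, hzL, hxz, rfl, fun w hw hxw => (hmin ⟨hw, hxw.1⟩).not_gt hxw.2⟩,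
    Nat.sub_le_sub_right (hmin ⟨hy, hxy⟩) x⟩

namespace IsFactorization

theorem exists_mem_deltaSet_le (hl : IsFactorization G₀ B l) (hl' : IsFactorization G₀ B l')
    (hlt : card l < card l') : ∃ d ∈ DeltaSet G₀, d ≤ card l' - card l := by
  obtain ⟨d, hd, hle⟩ := exists_mem_deltaOf_le (L := LengthSet G₀ B) ⟨l, rfl, hl⟩ ⟨l', rfl, hl'⟩ hlt
  have hl'0 : l' ≠ 0 := card_pos.1 (by omega)
  exact ⟨d, ⟨B, hl.isZeroSumSeq, hl'.ne_zero hl'0, hd⟩, hle⟩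

theorem card_le_card_of_lt_sInf_add (hl : IsFactorization G₀ B l) (hl' : IsFactorization G₀ B l')
    (h : card l' < sInf (DeltaSet G₀) + card l) : card l' ≤ card l := by
  by_contra! hlt
  obtain ⟨d, hd, hle⟩ := hl.exists_mem_deltaSet_le hl' hlt
  have := Nat.sInf_le hd
  omega

end IsFactorization

theorem IsHalfFactorialSet.card_eq (h : IsHalfFactorialSet G₀) (hl : IsFactorization G₀ B l)
    (hl' : IsFactorization G₀ B l') : card l = card l' := by
  have key {m m'} (hm : IsFactorization G₀ B m) (hm' : IsFactorization G₀ B m') :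
      card m' ≤ card m := by
    by_contra! hlt
    obtain ⟨d, hd, -⟩ := hm.exists_mem_deltaSet_le hm' hlt
    exact Set.notMem_empty d (h ▸ hd)
  exact (key hl' hl).antisymm (key hl hl')

end Factorizations

section CrossNumber

variable {G : Type*} [AddCommGroup G] {E G₀ : Set G} {B S : Multiset G}
  {l l' : Multiset (Multiset G)} {g : G}

@[simp]
theorem crossNumber_zero : crossNumber (0 : Multiset G) = 0 := by
  simp [crossNumber]

@[simp]
theorem crossNumber_add (S T : Multiset G) :
    crossNumber (S + T) = crossNumber S + crossNumber T := by
  simp [crossNumber]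

theorem crossNumber_sum (l : Multiset (Multiset G)) :
    crossNumber l.sum = (l.map crossNumber).sum := by
  induction l using Multiset.induction with
  | empty => simp
  | cons A l ih => rw [sum_cons, crossNumber_add, ih, map_cons, sum_cons]

theorem crossNumber_replicate_addOrderOf (hfin : IsOfFinAddOrder g) :
    crossNumber (replicate (addOrderOf g) g) = 1 := by
  simp [crossNumber, hfin.addOrderOf_pos.ne']

theorem crossNumber_sum_of_forall_eq_one (hl : ∀ A ∈ l, crossNumber A = 1) :
    crossNumber l.sum = card l := by
  rw [crossNumber_sum, map_congr rfl hl, map_const', sum_replicate, nsmul_one]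

theorem card_le_exponent_mul_crossNumber (hG : AddMonoid.ExponentExists G) (S : Multiset G) :
    (card S : ℚ) ≤ AddMonoid.exponent G * crossNumber S := by
  have hterm : ∀ x ∈ S.map fun g => (addOrderOf g : ℚ)⁻¹, (AddMonoid.exponent G : ℚ)⁻¹ ≤ x := by
    intro x hx
    obtain ⟨g, -, rfl⟩ := mem_map.1 hx
    have hpos : (0 : ℚ) < addOrderOf g := mod_cast hG.addOrderOf_pos g
    have hle : addOrderOf g ≤ AddMonoid.exponent G :=
      Nat.le_of_dvd hG.exponent_pos (AddMonoid.addOrder_dvd_exponent g)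
    gcongr
  have hexp : (0 : ℚ) < AddMonoid.exponent G := mod_cast hG.exponent_pos
  have hsum := Multiset.card_nsmul_le_sum hterm
  rwa [card_map, nsmul_eq_mul, ← div_eq_mul_inv, div_le_iff₀' hexp] at hsum

theorem IsLCNSet.crossNumber_eq_one_of_le_card (hLCN : IsLCNSet G₀) (hl : IsFactorization G₀ B l)
    (h : crossNumber B ≤ card l) : ∀ A ∈ l, crossNumber A = 1 := by
  have hone : ∀ A ∈ l, 1 ≤ crossNumber A := fun A hA => hLCN A (hl.1 A hA)
  by_contra! ⟨A, hA, hne⟩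
  have hlt : (l.map fun _ => (1 : ℚ)).sum < (l.map crossNumber).sum :=
    sum_lt_sum hone ⟨A, hA, (hone A hA).lt_of_ne' hne⟩
  rw [map_const', sum_replicate, nsmul_one, ← crossNumber_sum, hl.2] at hlt
  exact h.not_gt hlt

theorem exists_isFactorization_exponent_nsmul (hG : AddMonoid.ExponentExists G)
    (hS : ∀ x ∈ S, x ∈ E) :
    ∃ l, IsFactorization E (AddMonoid.exponent G • S) l ∧
      (card l : ℚ) = AddMonoid.exponent G * crossNumber S := by
  induction S using Multiset.induction with
  | empty => exact ⟨0, ⟨by simp, by simp⟩, by simp⟩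
  | cons a S ih =>
    obtain ⟨ha, hS⟩ := forall_mem_cons.1 hS
    obtain ⟨l, hl, hcard⟩ := ih hS
    have hfin : IsOfFinAddOrder a := hG.isOfFinAddOrder
    obtain ⟨m, hm⟩ := AddMonoid.addOrder_dvd_exponent a
    have hla := (isAtomSeq_replicate_addOrderOf ha hfin).isFactorization_replicate m
    have hsplit : AddMonoid.exponent G • (a ::ₘ S) =
        m • replicate (addOrderOf a) a + AddMonoid.exponent G • S := by
      rw [← singleton_add, nsmul_add, nsmul_singleton, nsmul_replicate, hm, mul_comm]
    have hlen : (m : ℚ) = AddMonoid.exponent G * (addOrderOf a : ℚ)⁻¹ := by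
      have : (addOrderOf a : ℚ) ≠ 0 := mod_cast hfin.addOrderOf_pos.ne'
      rw [hm]
      push_cast
      field_simp
    refine ⟨_, hsplit ▸ hla.add hl, ?_⟩
    rw [card_add, card_replicate, Nat.cast_add, hcard, hlen, ← mul_add]
    simp [crossNumber]

theorem isHalfFactorialSet_iff_crossNumber_eq_one (hG : AddMonoid.ExponentExists G) :
    IsHalfFactorialSet G₀ ↔ ∀ U, IsAtomSeq G₀ U → crossNumber U = 1 := by
  constructor
  · intro h U hU
    -- The sequence `exp(G) • U` is a sum of `exp(G)` copies of `U`, and of `exp(G) * k(U)` atoms of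
    -- the form `g, …, g` (`ord(g)` times).
    obtain ⟨l, hl, hcard⟩ := exists_isFactorization_exponent_nsmul hG hU.1.1
    have hexp : (AddMonoid.exponent G : ℚ) ≠ 0 := mod_cast hG.exponent_ne_zero
    rw [h.card_eq hl (hU.isFactorization_replicate _), card_replicate] at hcard
    exact (mul_eq_left₀ hexp).1 hcard.symm
  · intro h
    have hlength {B l} (hl : IsFactorization G₀ B l) : crossNumber B = card l :=
      hl.2 ▸ crossNumber_sum_of_forall_eq_one fun A hA => h A (hl.1 A hA)
    refine Set.eq_empty_of_forall_notMem ?_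
    rintro d ⟨B, -, -, -, ⟨l, rfl, hl⟩, -, ⟨l', rfl, hl'⟩, hlt, -⟩
    have : (card l : ℚ) = card l' := (hlength hl).symm.trans (hlength hl')
    exact hlt.ne (mod_cast this)

theorem exists_isAtomSeq_crossNumber_ne_one (hG : AddMonoid.ExponentExists G)
    (h : ¬ IsHalfFactorialSet G₀) : ∃ U, IsAtomSeq G₀ U ∧ crossNumber U ≠ 1 := by
  simpa [isHalfFactorialSet_iff_crossNumber_eq_one hG] using h

theorem isLCNSet_of_exponent_le (hG : AddMonoid.ExponentExists G)
    (h : AddMonoid.exponent G ≤ sInf (DeltaSet G₀) + 1) : IsLCNSet G₀ := by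
  intro U hU
  obtain ⟨l, hl, hcard⟩ := exists_isFactorization_exponent_nsmul hG hU.1.1
  have hexp : (0 : ℚ) < AddMonoid.exponent G := mod_cast hG.exponent_pos
  suffices AddMonoid.exponent G ≤ card l by
    refine le_of_mul_le_mul_left ?_ hexp
    rw [mul_one, ← hcard]
    exact_mod_cast this
  by_contra! hlt
  have hl1 : card l ≤ 1 := by
    by_contra! hl1
    have hle := hl.card_le_card_of_lt_sInf_add (hU.isFactorization_replicate _)
      (by rw [card_replicate]; omega)
    exact hlt.not_ge (by simpa using hle)
  have hcardU : card U ≤ card l := by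
    have := card_le_exponent_mul_crossNumber hG U
    rw [← hcard] at this
    exact_mod_cast this
  obtain ⟨a, rfl⟩ := card_eq_one.1 (le_antisymm (hcardU.trans hl1) (card_pos.2 hU.2.1))
  have ha : a = 0 := by simpa using hU.1.2
  have : (card l : ℚ) = AddMonoid.exponent G := by rw [hcard]; simp [crossNumber, ha]
  exact hlt.ne (mod_cast this)

theorem IsFactorization.crossNumber_eq_one_of_card_le (hG : AddMonoid.ExponentExists G)
    (h : AddMonoid.exponent G ≤ sInf (DeltaSet G₀) + 1) (hl : IsFactorization G₀ B l)
    (hl1 : ∀ A ∈ l, crossNumber A = 1) (hcard : card l ≤ sInf (DeltaSet G₀) + 1)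
    (hl' : IsFactorization G₀ B l') (hl'1 : 1 < card l') : ∀ A ∈ l', crossNumber A = 1 := by
  refine (isLCNSet_of_exponent_le hG h).crossNumber_eq_one_of_le_card hl' ?_
  rw [← hl.2, crossNumber_sum_of_forall_eq_one hl1]
  exact_mod_cast hl'.card_le_card_of_lt_sInf_add hl (by omega)

theorem card_le_of_crossNumber_eq_one (hG : AddMonoid.ExponentExists G) (hS : crossNumber S = 1) :
    card S ≤ AddMonoid.exponent G := by
  simpa [hS] using card_le_exponent_mul_crossNumber hG S

end CrossNumber

section CrossOneAtoms

variable {G : Type*} [AddCommGroup G] {G₀ : Set G} {B S U Z : Multiset G}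

/-- The atoms over `G₀` of cross number `1`. -/
def crossOneAtoms (G₀ : Set G) : Set (Multiset G) :=
  {A | IsAtomSeq G₀ A ∧ crossNumber A = 1}

/-- The monoid of zero-sum sequences over `G₀` that factor into atoms of cross number `1`. -/
def crossOneMonoid (G₀ : Set G) : AddSubmonoid (Multiset G) :=
  AddSubmonoid.closure (crossOneAtoms G₀)

theorem mem_crossOneMonoid_iff :
    B ∈ crossOneMonoid G₀ ↔ ∃ l, IsFactorization G₀ B l ∧ ∀ A ∈ l, crossNumber A = 1 := by
  constructor
  · intro hB
    obtain ⟨l, hl, hlB⟩ := AddSubmonoid.exists_multiset_of_mem_closure hB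
    exact ⟨l, ⟨fun A hA => (hl A hA).1, hlB⟩, fun A hA => (hl A hA).2⟩
  · rintro ⟨l, ⟨hl, rfl⟩, hl1⟩
    exact AddSubmonoid.multiset_sum_mem _ _ fun A hA =>
      AddSubmonoid.subset_closure ⟨hl A hA, hl1 A hA⟩

theorem IsAtomSeq.crossNumber_eq_one_of_mem_crossOneMonoid (hU : IsAtomSeq G₀ U)
    (hmem : U ∈ crossOneMonoid G₀) : crossNumber U = 1 := by
  obtain ⟨l, hl, hl1⟩ := mem_crossOneMonoid_iff.1 hmem
  have hl0 : l ≠ 0 := fun h => hU.2.1 (by rw [← hl.2, h, sum_zero])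
  obtain ⟨A, hA⟩ := exists_mem_of_ne_zero hl0
  rw [← hU.eq_of_le (hl.2 ▸ le_sum_of_mem hA) (hl.1 A hA).1 (hl.1 A hA).2.1, hl1 A hA]

theorem exists_le_card_le_of_le_sum {α : Type*} {S : Multiset α} {l : Multiset (Multiset α)}
    (h : S ≤ l.sum) : ∃ l' ≤ l, card l' ≤ card S ∧ S ≤ l'.sum := by
  classical
  induction l using Multiset.induction generalizing S with
  | empty => exact ⟨0, le_rfl, by simp, h⟩
  | cons A l ih =>
    obtain ⟨l', hl'l, hcard, hle⟩ := ih (S := S - A) (tsub_le_iff_left.2 (sum_cons A l ▸ h))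
    by_cases hdisj : S - A = S
    · rw [hdisj] at hcard hle
      exact ⟨l', hl'l.trans (le_cons_self l A), hcard, hle⟩
    · refine ⟨A ::ₘ l', cons_le_cons A hl'l, ?_, by rwa [sum_cons, ← tsub_le_iff_left]⟩
      have := card_lt_card (lt_of_le_of_ne (Multiset.sub_le_self S A) hdisj)
      rw [card_cons]
      omega

theorem mem_crossOneMonoid_of_add_mem_of_mem_crossOneAtoms (hG : AddMonoid.ExponentExists G)
    (h : AddMonoid.exponent G ≤ sInf (DeltaSet G₀) + 1) (hZ : Z ∈ crossOneAtoms G₀)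
    (hZB : Z + B ∈ crossOneMonoid G₀) : B ∈ crossOneMonoid G₀ := by
  obtain ⟨l, hl, hl1⟩ := mem_crossOneMonoid_iff.1 hZB
  obtain ⟨l₁, hl₁l, hcard, hZl₁⟩ :=
    exists_le_card_le_of_le_sum (hl.2 ▸ Multiset.le_add_right Z B : Z ≤ l.sum)
  obtain ⟨l₂, rfl⟩ := Multiset.le_iff_exists_add.1 hl₁l
  obtain ⟨C, hC⟩ := Multiset.le_iff_exists_add.1 hZl₁
  have hl₁ : IsFactorization G₀ (Z + C) l₁ := ⟨fun A hA => hl.1 A (mem_of_le hl₁l hA), hC⟩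
  have hl₁1 : ∀ A ∈ l₁, crossNumber A = 1 := fun A hA => hl1 A (mem_of_le hl₁l hA)
  have hB : B = C + l₂.sum := by
    have := hl.2
    rwa [sum_add, hC, add_assoc, add_right_inj, eq_comm] at this
  obtain ⟨m, hm⟩ := (hl₁.isZeroSumSeq.of_add_left hZ.1.1).exists_isFactorization
  have hm1 : ∀ A ∈ m, crossNumber A = 1 := by
    intro A hA
    have hlen : 1 < card (Z ::ₘ m) := by
      rw [card_cons]
      exact Nat.lt_add_of_pos_left (card_pos_iff_exists_mem.2 ⟨A, hA⟩)
    exact hl₁.crossNumber_eq_one_of_card_le hG h hl₁1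
      (hcard.trans ((card_le_of_crossNumber_eq_one hG hZ.2).trans h)) (hm.cons hZ.1) hlen A
      (mem_cons_of_mem hA)
  refine hB ▸ add_mem (mem_crossOneMonoid_iff.2 ⟨m, hm, hm1⟩) (mem_crossOneMonoid_iff.2
    ⟨l₂, ⟨fun A hA => hl.1 A (mem_add.2 (.inr hA)), rfl⟩, fun A hA => hl1 A (mem_add.2 (.inr hA))⟩)

theorem mem_crossOneMonoid_of_add_mem (hG : AddMonoid.ExponentExists G)
    (h : AddMonoid.exponent G ≤ sInf (DeltaSet G₀) + 1) (hS : S ∈ crossOneMonoid G₀)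
    (hSB : S + B ∈ crossOneMonoid G₀) : B ∈ crossOneMonoid G₀ := by
  induction hS using AddSubmonoid.closure_induction generalizing B with
  | mem Z hZ => exact mem_crossOneMonoid_of_add_mem_of_mem_crossOneAtoms hG h hZ hSB
  | zero => rwa [zero_add] at hSB
  | add S T _ _ ihS ihT => exact ihT (ihS (by rwa [← add_assoc]))

end CrossOneAtoms

section Cardinality

variable {G : Type*} [AddCommGroup G] {G₀ : Set G}

theorem exists_isFactorization_card_eq_ncard (hG : AddMonoid.ExponentExists G)
    (hfin : G₀.Finite) : ∃ B l, IsFactorization G₀ B l ∧ (∀ A ∈ l, crossNumber A = 1) ∧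
      card l = G₀.ncard ∧ ∀ U, IsAtomSeq G₀ U → U ≤ B := by
  classical
  have hord (g : G) : IsOfFinAddOrder g := hG.isOfFinAddOrder
  set P : G → Multiset G := fun g => replicate (addOrderOf g) g
  set l : Multiset (Multiset G) := hfin.toFinset.val.map P
  have hl : ∀ A ∈ l, IsAtomSeq G₀ A := forall_mem_map_iff.2 fun g hg =>
    isAtomSeq_replicate_addOrderOf (by simpa using hg) (hord g)
  refine ⟨l.sum, l, ⟨hl, rfl⟩, ?_, ?_, fun U hU => Multiset.le_iff_count.2 fun g => ?_⟩
  · exact forall_mem_map_iff.2 fun g _ => crossNumber_replicate_addOrderOf (hord g)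
  · rw [card_map, Finset.card_val, ← Set.ncard_eq_toFinset_card G₀ hfin]
  · by_cases hg : g ∈ U
    · calc U.count g ≤ addOrderOf g := hU.count_le_addOrderOf (hU.1.1 g hg) (hord g)
        _ = (P g).count g := (count_replicate_self g _).symm
        _ ≤ l.sum.count g := count_le_of_le g (le_sum_of_mem
          (mem_map_of_mem P (by simpa using hU.1.1 g hg)))
    · exact (count_eq_zero_of_notMem hg).trans_le (Nat.zero_le _)

theorem sInf_deltaSet_add_two_le_ncard (hG : AddMonoid.ExponentExists G)
    (h : AddMonoid.exponent G ≤ sInf (DeltaSet G₀) + 1) (hfin : G₀.Finite)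
    (hne : ¬ IsHalfFactorialSet G₀) : sInf (DeltaSet G₀) + 2 ≤ G₀.ncard := by
  obtain ⟨U, hU, hU1⟩ := exists_isAtomSeq_crossNumber_ne_one hG hne
  obtain ⟨B, l, hl, hl1, hcard, hle⟩ := exists_isFactorization_card_eq_ncard hG hfin
  obtain ⟨C, rfl⟩ := Multiset.le_iff_exists_add.1 (hle U hU)
  obtain ⟨m, hm⟩ := (hl.isZeroSumSeq.of_add_left hU.1).exists_isFactorization
  by_contra! hlt
  refine hU1 ?_
  by_cases hm0 : m = 0
  · have hC : C = 0 := by rw [← hm.2, hm0, sum_zero]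
    exact hU.crossNumber_eq_one_of_mem_crossOneMonoid
      (mem_crossOneMonoid_iff.2 ⟨l, by rwa [hC, add_zero] at hl, hl1⟩)
  · refine hl.crossNumber_eq_one_of_card_le hG h hl1 (by omega) (hm.cons hU) ?_ U
      (mem_cons_self U m)
    rw [card_cons]
    exact Nat.lt_add_of_pos_left (card_pos.2 hm0)

end Cardinality

section CountVector

variable {α : Type*}

open scoped Classical in
/-- The vector of multiplicities of a multiset, with integer entries so that differences of
multisets make sense. -/
noncomputable def countVector : Multiset α →+ (α →₀ ℤ) :=
  (Finsupp.mapRange.addMonoidHom (Nat.castAddMonoidHom ℤ)).comp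
    (Multiset.toFinsupp : Multiset α ≃+ (α →₀ ℕ)).toAddMonoidHom

theorem countVector_apply [DecidableEq α] (S : Multiset α) (a : α) :
    countVector S a = S.count a := by
  simp only [countVector, AddMonoidHom.comp_apply, AddEquiv.coe_toAddMonoidHom,
    Finsupp.mapRange.addMonoidHom_apply, Finsupp.mapRange_apply, Multiset.toFinsupp_apply,
    Nat.coe_castAddMonoidHom]
  congr!

theorem countVector_injective : Function.Injective (countVector : Multiset α → α →₀ ℤ) := by
  classical
  intro S T h
  ext a
  exact_mod_cast (by simpa [countVector_apply] using DFunLike.congr_fun h a :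
    (S.count a : ℤ) = T.count a)

theorem exists_countVector_eq {x : α →₀ ℤ} (hx : 0 ≤ x) : ∃ S : Multiset α, countVector S = x := by
  classical
  refine ⟨Finsupp.toMultiset (x.mapRange Int.toNat Int.toNat_zero), Finsupp.ext fun a => ?_⟩
  simpa [countVector_apply, Finsupp.count_toMultiset] using hx a

theorem linearCombination_countVector {M : Type*} [AddCommGroup M] (S : Multiset M) :
    Finsupp.linearCombination ℤ id (countVector S) = S.sum := by
  classical
  induction S using Multiset.induction with
  | empty => simp
  | cons a S ih =>
    have ha : countVector ({a} : Multiset M) = Finsupp.single a 1 := by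
      ext b
      simp [countVector_apply, count_singleton, Finsupp.single_apply, eq_comm]
    rw [← singleton_add, _root_.map_add, _root_.map_add, ih, ha, sum_add, sum_singleton,
      Finsupp.linearCombination_single, one_smul, id]

end CountVector

theorem exists_sub_of_mem_closure_image {M A : Type*} [AddCommMonoid M] [AddCommGroup A]
    (f : M →+ A) {s : Set M} {x : A} (hx : x ∈ AddSubgroup.closure (f '' s)) :
    ∃ a ∈ AddSubmonoid.closure s, ∃ b ∈ AddSubmonoid.closure s, x = f a - f b := by
  induction hx using AddSubgroup.closure_induction with
  | mem x hx =>
    obtain ⟨a, ha, rfl⟩ := hx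
    exact ⟨a, AddSubmonoid.subset_closure ha, 0, zero_mem _, by simp⟩
  | zero => exact ⟨0, zero_mem _, 0, zero_mem _, by simp⟩
  | add x y _ _ hx hy =>
    obtain ⟨a, ha, b, hb, rfl⟩ := hx
    obtain ⟨c, hc, d, hd, rfl⟩ := hy
    exact ⟨a + c, add_mem ha hc, b + d, add_mem hb hd, by rw [_root_.map_add, _root_.map_add]; abel⟩
  | neg x _ hx =>
    obtain ⟨a, ha, b, hb, rfl⟩ := hx
    exact ⟨b, hb, a, ha, neg_sub _ _⟩

section Lattices

variable {G : Type*} [AddCommGroup G] {E G₀ : Set G} {Λ : AddSubgroup (G →₀ ℤ)} {x : G →₀ ℤ}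
  {g h h' : G} {U B : Multiset G}

/-- The lattice of integral relations `∑ x g • g = 0` between elements of `E`. -/
noncomputable def relationLattice (E : Set G) : AddSubgroup (G →₀ ℤ) :=
  (Finsupp.supported ℤ ℤ E).toAddSubgroup ⊓ (Finsupp.linearCombination ℤ id).toAddMonoidHom.ker

theorem mem_relationLattice :
    x ∈ relationLattice E ↔ ↑x.support ⊆ E ∧ Finsupp.linearCombination ℤ id x = 0 :=
  Iff.rfl

theorem countVector_mem_relationLattice :
    countVector B ∈ relationLattice E ↔ IsZeroSumSeq E B := by
  classical
  rw [mem_relationLattice, linearCombination_countVector]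
  refine and_congr_left fun _ => forall_congr' fun g => ?_
  simp [countVector_apply]

theorem mem_relationLattice_sdiff_singleton (hx : x ∈ relationLattice E) (hg : x g = 0) :
    x ∈ relationLattice (E \ {g}) := by
  refine ⟨fun a ha => ⟨hx.1 ha, ?_⟩, hx.2⟩
  rintro rfl
  exact Finsupp.mem_support_iff.1 ha hg

theorem relationLattice_le (hG : AddMonoid.ExponentExists G)
    (h : ∀ B, IsZeroSumSeq E B → countVector B ∈ Λ) : relationLattice E ≤ Λ := by
  intro x hx
  have hnonneg {y : G →₀ ℤ} (hy : y ∈ relationLattice E) (hy0 : 0 ≤ y) : y ∈ Λ := by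
    obtain ⟨B, rfl⟩ := exists_countVector_eq hy0
    exact h B (countVector_mem_relationLattice.1 hy)
  set n := AddMonoid.exponent G
  set y : G →₀ ℤ := n • x.mapRange abs abs_zero with hy_def
  have hyx (g : G) : y g = n * |x g| := by simp [hy_def]
  have hy : y ∈ relationLattice E := by
    refine ⟨fun g hg => hx.1 ?_, ?_⟩
    · simp_all
    · exact (_root_.map_nsmul _ _ _).trans (AddMonoid.exponent_nsmul_eq_zero _)
  have hle (g : G) : |x g| ≤ y g := by
    rw [hyx]
    exact le_mul_of_one_le_left (abs_nonneg _) (mod_cast hG.exponent_pos)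
  rw [← add_sub_cancel_right x y]
  refine sub_mem (hnonneg (add_mem hx hy) fun g => ?_) (hnonneg hy fun g => ?_)
  · exact neg_le_iff_add_nonneg.1 ((neg_le_neg (hle g)).trans (neg_abs_le _))
  · exact (abs_nonneg _).trans (hle g)

theorem relationLattice_le_of_mem_closure (hΛ : ∀ g ∈ G₀, relationLattice (G₀ \ {g}) ≤ Λ)
    (hh : h ∈ G₀) (hh' : h' ∈ G₀) (hne : h' ≠ h) (hmem : h ∈ AddSubgroup.closure (G₀ \ {h, h'})) :
    relationLattice G₀ ≤ Λ := by
  obtain ⟨y, hy, hyh⟩ : ∃ y ∈ Finsupp.supported ℤ ℤ (G₀ \ {h, h'}),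
      Finsupp.linearCombination ℤ id y = h := by
    rw [← Finsupp.mem_span_image_iff_linearCombination, Set.image_id]
    rwa [← Submodule.span_int_eq_addSubgroupClosure] at hmem
  have hyE : ∀ a, y a ≠ 0 → a ∈ G₀ \ {h, h'} := fun a ha => hy (Finsupp.mem_support_iff.2 ha)
  set z := Finsupp.single h 1 - y
  have hzh : z h = 1 := by
    have : y h = 0 := by
      by_contra hyh0
      simpa using hyE h hyh0
    simp [z, this]
  have hz : z ∈ relationLattice (G₀ \ {h'}) := by
    refine ⟨fun a ha => ?_, by simp [z, hyh]⟩
    rcases eq_or_ne a h with rfl | hah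
    · exact ⟨hh, hne.symm⟩
    · have ha' : y a ≠ 0 := by simpa [z, Finsupp.single_apply, hah.symm] using ha
      exact ⟨(hyE a ha').1, fun h => (hyE a ha').2 (.inr h)⟩
  intro x hx
  have hzG₀ : z ∈ relationLattice G₀ := ⟨hz.1.trans Set.sdiff_subset, hz.2⟩
  have hxz : x - x h • z ∈ relationLattice (G₀ \ {h}) :=
    mem_relationLattice_sdiff_singleton (sub_mem hx (zsmul_mem hzG₀ _)) (by simp [hzh])
  rw [← sub_add_cancel x (x h • z)]
  exact add_mem (hΛ h hh hxz) (zsmul_mem (hΛ h' hh' hz) _)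

/-- The lattice spanned by the atoms over `G₀` of cross number `1`. -/
noncomputable def crossOneLattice (G₀ : Set G) : AddSubgroup (G →₀ ℤ) :=
  AddSubgroup.closure (countVector '' crossOneAtoms G₀)

theorem IsHalfFactorialSet.relationLattice_le_crossOneLattice (hE : IsHalfFactorialSet E)
    (hG : AddMonoid.ExponentExists G) (hEG₀ : E ⊆ G₀) :
    relationLattice E ≤ crossOneLattice G₀ := by
  refine relationLattice_le hG fun B hB => ?_
  obtain ⟨l, hl, rfl⟩ := hB.exists_isFactorization
  rw [map_multiset_sum]
  refine AddSubgroup.multiset_sum_mem _ _ (forall_mem_map_iff.2 fun A hA => ?_)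
  have hA1 := (isHalfFactorialSet_iff_crossNumber_eq_one hG).1 hE A (hl A hA)
  exact AddSubgroup.subset_closure ⟨A, ⟨(hl A hA).mono hEG₀, hA1⟩, rfl⟩

theorem IsAtomSeq.countVector_notMem_crossOneLattice (hU : IsAtomSeq G₀ U)
    (hU1 : crossNumber U ≠ 1) (hG : AddMonoid.ExponentExists G)
    (hexp : AddMonoid.exponent G ≤ sInf (DeltaSet G₀) + 1) :
    countVector U ∉ crossOneLattice G₀ := by
  intro hmem
  obtain ⟨S, hS, T, hT, hUST⟩ := exists_sub_of_mem_closure_image countVector hmem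
  have hTU : T + U = S := countVector_injective (by rw [_root_.map_add, hUST, add_sub_cancel])
  exact hU1 (hU.crossNumber_eq_one_of_mem_crossOneMonoid
    (mem_crossOneMonoid_of_add_mem hG hexp hT (hTU ▸ hS)))

end Lattices

section Rank

variable {G : Type*} [AddCommGroup G] {p : ℕ}

theorem bddAbove_pRank [Finite G] : BddAbove {r : ℕ | ∃ p : ℕ, p.Prime ∧ r = pRank G p} := by
  refine ⟨Nat.card G, ?_⟩
  rintro _ ⟨p, -, rfl⟩
  exact (Nat.log_le_self p _).trans (Nat.card_le_card_of_injective _ Subtype.val_injective)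

theorem pRank_le_rankG [Finite G] (hp : p.Prime) : pRank G p ≤ rankG G :=
  le_csSup bddAbove_pRank ⟨p, hp, rfl⟩

theorem exists_prime_pRank_eq_rankG [Finite G] : ∃ p : ℕ, p.Prime ∧ rankG G = pRank G p :=
  Nat.sSup_mem (s := {r | ∃ p : ℕ, p.Prime ∧ r = pRank G p}) ⟨_, 2, Nat.prime_two, rfl⟩
    bddAbove_pRank

theorem two_le_rankG_of_exponent_le [Finite G] (h : AddMonoid.exponent G ≤ rankG G) :
    2 ≤ rankG G := by
  have hpos : 0 < AddMonoid.exponent G := AddMonoid.ExponentExists.of_finite.exponent_pos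
  by_contra! hlt
  have : Subsingleton G := AddMonoid.exp_eq_one_iff.1 (by omega)
  obtain ⟨p, hp, hpG⟩ := exists_prime_pRank_eq_rankG (G := G)
  have hcard : Nat.card {x : G // p • x = 0} ≤ 1 :=
    Finite.card_le_one_iff_subsingleton.2 inferInstance
  have : rankG G = 0 := hpG.trans (Nat.log_of_lt (hcard.trans_lt hp.one_lt))
  omega

theorem card_le_card_torsion_of_surjective {V : Type*} [AddCommGroup V] [Finite G] {n : ℕ}
    (φ : G →+ V) (hφ : Function.Surjective φ) (hV : ∀ v : V, n • v = 0) :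
    Nat.card V ≤ Nat.card {x : G // n • x = 0} := by
  set m : G →+ G := nsmulAddMonoidHom n
  have hle : m.range ≤ φ.ker := by
    rintro _ ⟨x, rfl⟩
    exact (map_nsmul φ n x).trans (hV _)
  have hindex : m.range.index = Nat.card m.ker := by
    have h₁ := m.range.card_mul_index
    have h₂ := m.ker.card_mul_index
    rw [AddSubgroup.index_ker] at h₂
    refine Nat.eq_of_mul_eq_mul_left (Nat.card_pos (α := m.range)) ?_
    rw [h₁, ← h₂, mul_comm]
  calc Nat.card V = φ.ker.index := by
        rw [AddSubgroup.index_ker, AddMonoidHom.range_eq_top.2 hφ, AddSubgroup.card_top]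
    _ ≤ m.range.index := Nat.le_of_dvd (Nat.pos_of_ne_zero AddSubgroup.index_ne_zero_of_finite)
      (AddSubgroup.index_dvd_of_le hle)
    _ = Nat.card {x : G // n • x = 0} := hindex

/-- The family `e` is independent modulo `p`: the coefficients of every integral relation between
its members are divisible by `p`. For `p` prime this says that the classes of the `e i` form an
`𝔽_p`-basis of `⟨e⟩ / p⟨e⟩`, so the members of `e` need not have order `p`. -/
def IndepMod {ι : Type*} [Fintype ι] (p : ℕ) (e : ι → G) : Prop :=
  ∀ z : ι → ℤ, ∑ i, z i • e i = 0 → ∀ i, (p : ℤ) ∣ z i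

theorem IndepMod.card_le_pRank {ι : Type*} [Fintype ι] [Finite G] {e : ι → G}
    (he : IndepMod p e) (hp : p.Prime) : Fintype.card ι ≤ pRank G p := by
  have : NeZero p := ⟨hp.ne_zero⟩
  set ψ : (ι → ℤ) →+ G := (Fintype.linearCombination ℤ e).toAddMonoidHom
  set π : (ι → ℤ) →+ (ι → ZMod p) := (Int.castAddHom (ZMod p)).compLeft ι
  have hπ : Function.Surjective π := fun v =>
    ⟨fun i => (v i).cast, funext fun i => ZMod.intCast_zmod_cast (v i)⟩
  have hker : ψ.rangeRestrict.ker ≤ π.ker := fun z hz => by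
    have hz' : ∑ i, z i • e i = 0 := congrArg Subtype.val hz
    exact funext fun i => (ZMod.intCast_zmod_eq_zero_iff_dvd _ _).2 (he z hz' i)
  obtain ⟨φ, hφ⟩ : ∃ φ : ψ.range →+ (ι → ZMod p), φ.comp ψ.rangeRestrict = π :=
    ⟨_, AddMonoidHom.liftOfRightInverse_comp _ _
      (Function.rightInverse_surjInv ψ.rangeRestrict_surjective) ⟨π, hker⟩⟩
  have hφ' : Function.Surjective φ := by
    refine Function.Surjective.of_comp (g := ψ.rangeRestrict) ?_
    rwa [← AddMonoidHom.coe_comp, hφ]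
  have hcard := card_le_card_torsion_of_surjective (n := p) φ hφ' fun v => funext fun i => by simp
  rw [Nat.card_fun, Nat.card_zmod, Nat.card_eq_fintype_card] at hcard
  refine Nat.le_log_of_pow_le hp.one_lt (hcard.trans ?_)
  have htors : ∀ x : ψ.range, p • x = 0 → p • (x : G) = 0 := fun x hx => congrArg Subtype.val hx
  exact Nat.card_le_card_of_injective (Subtype.map Subtype.val htors)
    (Subtype.map_injective _ Subtype.val_injective)

theorem exists_prime_zmod_hom_ne_zero (Q : Type*) [AddCommGroup Q] [IsAddCyclic Q]
    [Nontrivial Q] : ∃ p : ℕ, p.Prime ∧ ∃ χ : Q →+ ZMod p, χ ≠ 0 := by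
  have hcard : Nat.card Q ≠ 1 := fun h => not_subsingleton Q (Nat.card_eq_one_iff_unique.1 h).1
  obtain ⟨p, hp, hdvd⟩ := Nat.exists_prime_and_dvd hcard
  have : Fact p.Prime := ⟨hp⟩
  set f := zmodAddCyclicAddEquiv (G := Q) inferInstance
  refine ⟨p, hp, (ZMod.castHom hdvd (ZMod p)).toAddMonoidHom.comp f.symm.toAddMonoidHom,
    fun h => ?_⟩
  have h1 : ZMod.castHom hdvd (ZMod p) (f.symm (f 1)) = 0 := DFunLike.congr_fun h (f 1)
  rw [f.symm_apply_apply, map_one] at h1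
  exact one_ne_zero h1

theorem exists_prime_zmod_hom_of_ker_le {M : Type*} [AddCommGroup M] {N : AddSubgroup M}
    (f : M →+ ℤ) (hf : f.ker ≤ N) (hN : N ≠ ⊤) :
    ∃ p : ℕ, p.Prime ∧ ∃ χ : M →+ ZMod p, N ≤ χ.ker ∧ χ ≠ 0 := by
  have : IsAddCyclic (M ⧸ f.ker) := isAddCyclic_of_surjective
    (QuotientAddGroup.quotientKerEquivRange f).symm (AddEquiv.surjective _)
  have : IsAddCyclic (M ⧸ N) := isAddCyclic_of_surjective
    (QuotientAddGroup.map f.ker N (AddMonoidHom.id M) hf)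
    (QuotientAddGroup.map_surjective_of_surjective _ _ _ QuotientAddGroup.mk_surjective hf)
  have : Nontrivial (M ⧸ N) := QuotientAddGroup.nontrivial_iff.2 hN
  obtain ⟨p, hp, χ, hχ⟩ := exists_prime_zmod_hom_ne_zero (M ⧸ N)
  refine ⟨p, hp, χ.comp (QuotientAddGroup.mk' N), fun x hx => ?_, fun h => hχ ?_⟩
  · simp [(QuotientAddGroup.eq_zero_iff x).2 hx]
  · ext x
    exact DFunLike.congr_fun h x

theorem indepMod_of_relationLattice_hom {G₀ : Set G} {o : G} [Fintype ↥(G₀ \ {o})] (hp : p.Prime)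
    (χ : relationLattice G₀ →+ ZMod p) (hχ : ∀ g ∈ G₀, ∀ x, x.1 g = 0 → χ x = 0)
    {w : relationLattice G₀} (hw : χ w ≠ 0) (ho : o ∈ G₀) :
    IndepMod p fun g : ↥(G₀ \ {o}) => w.1 g • (g : G) := by
  classical
  have : Fact p.Prime := ⟨hp⟩
  intro z hz g
  set y : G →₀ ℤ := ∑ h : ↥(G₀ \ {o}), Finsupp.single (h : G) (z h * w.1 h)
  have hyo : y o = 0 := by
    refine (Finsupp.finsetSum_apply _ _ _).trans (Finset.sum_eq_zero fun h _ => ?_)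
    exact Finsupp.single_eq_of_ne' h.2.2
  have hyg : y g = z g * w.1 g := by
    simp [y, Finsupp.finsetSum_apply, Finsupp.single_apply, Subtype.ext_iff.symm]
  have hy : y ∈ relationLattice G₀ := by
    refine mem_relationLattice.2 ⟨?_, ?_⟩
    · exact Submodule.sum_mem (Finsupp.supported ℤ ℤ G₀) fun h _ =>
        Finsupp.single_mem_supported ℤ _ h.2.1
    · simpa [y, mul_smul, -Finsupp.single_mul] using hz
  have hχy : χ ⟨y, hy⟩ = 0 := hχ o ho _ hyo
  have hχyw : χ (⟨y, hy⟩ - z g • w) = 0 := hχ g g.2.1 _ (by simp [hyg])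
  rw [map_sub, hχy, zero_sub, neg_eq_zero, map_zsmul, zsmul_eq_mul] at hχyw
  exact (ZMod.intCast_zmod_eq_zero_iff_dvd _ _).1 ((mul_eq_zero.1 hχyw).resolve_right hw)

theorem ncard_le_rankG_add_one [Finite G] {G₀ : Set G} {Λ : AddSubgroup (G →₀ ℤ)}
    (hΛ : ∀ g ∈ G₀, relationLattice (G₀ \ {g}) ≤ Λ) (hne : ¬ relationLattice G₀ ≤ Λ) :
    G₀.ncard ≤ rankG G + 1 := by
  rcases G₀.eq_empty_or_nonempty with rfl | ⟨o, ho⟩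
  · simp
  have := Fintype.ofFinite ↥(G₀ \ {o})
  set N : AddSubgroup (relationLattice G₀) := Λ.addSubgroupOf (relationLattice G₀)
  have hN : N ≠ ⊤ := fun h => hne (AddSubgroup.addSubgroupOf_eq_top.1 h)
  have hmem (g : G) (hg : g ∈ G₀) (x : relationLattice G₀) (hx : x.1 g = 0) : x ∈ N :=
    hΛ g hg (mem_relationLattice_sdiff_singleton x.2 hx)
  obtain ⟨p, hp, χ, hχN, hχ⟩ := exists_prime_zmod_hom_of_ker_le
    ((Finsupp.applyAddHom o).comp (relationLattice G₀).subtype) (fun x hx => hmem o ho x hx) hN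
  obtain ⟨w, hw⟩ := DFunLike.ne_iff.1 hχ
  have hindep := indepMod_of_relationLattice_hom hp χ (fun g hg x hx => hχN (hmem g hg x hx)) hw ho
  have hcard := (hindep.card_le_pRank hp).trans (pRank_le_rankG hp)
  rw [← Nat.card_eq_fintype_card, Nat.card_coe_set_eq, Set.ncard_sdiff_singleton_of_mem ho] at hcard
  omega

end Rank

section ExtremalSet

variable {G : Type*} [AddCommGroup G] {p : ℕ}

theorem exists_indepMod_log_card {V : Type*} [AddCommGroup V] [Finite V] [Fact p.Prime]
    [Module (ZMod p) V] : ∃ e : Fin (Nat.log p (Nat.card V)) → V, IndepMod p e := by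
  have hrank : Module.finrank (ZMod p) V = Nat.log p (Nat.card V) := by
    rw [Module.natCard_eq_pow_finrank (K := ZMod p) (V := V), Nat.card_zmod,
      Nat.log_pow (Fact.out : p.Prime).one_lt]
  let b := Module.finBasisOfFinrankEq (ZMod p) V hrank
  refine ⟨b, fun z hz i => ?_⟩
  have hb : ∑ i, (z i : ZMod p) • b i = 0 := by simpa only [Int.cast_smul_eq_zsmul] using hz
  exact (ZMod.intCast_zmod_eq_zero_iff_dvd _ _).1
    (Fintype.linearIndependent_iff.1 b.linearIndependent _ hb i)

theorem exists_indepMod_pRank [Finite G] (hp : p.Prime) :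
    ∃ e : Fin (pRank G p) → G, IndepMod p e ∧ ∀ i, p • e i = 0 := by
  have : Fact p.Prime := ⟨hp⟩
  set T : AddSubgroup G := (nsmulAddMonoidHom p : G →+ G).ker
  have hT (x : T) : p • (x : G) = 0 := x.2
  let _ : Module (ZMod p) T := AddCommGroup.zmodModule fun x => Subtype.ext (hT x)
  obtain ⟨e, he⟩ : ∃ e : Fin (pRank G p) → T, IndepMod p e := exists_indepMod_log_card (V := T)
  refine ⟨fun i => (e i : G), fun z hz => he z (Subtype.ext ?_), fun i => hT (e i)⟩
  rw [AddSubgroup.val_finsetSum]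
  exact hz

theorem dvd_of_mem_deltaSet {E : Set G} (φ : Multiset G →+ ℕ) {m d : ℕ} (hm : m ≠ 0)
    (hφ : ∀ U, IsAtomSeq E U → φ U ≡ m [MOD m * d]) : ∀ δ ∈ DeltaSet E, d ∣ δ := by
  have hlength {l} (hl : ∀ A ∈ l, IsAtomSeq E A) : φ l.sum ≡ card l * m [MOD m * d] := by
    induction l using Multiset.induction with
    | empty => simp [Nat.ModEq.rfl]
    | cons A l ih =>
      obtain ⟨hA, hl⟩ := forall_mem_cons.1 hl
      rw [sum_cons, _root_.map_add, card_cons, add_mul, one_mul, add_comm]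
      exact (ih hl).add (hφ A hA)
  rintro _ ⟨_, -, -, _, ⟨l, rfl, hl, rfl⟩, _, ⟨l', rfl, hl', hsum⟩, hlt, rfl, -⟩
  have hdvd := (Nat.modEq_iff_dvd' (Nat.mul_le_mul_right m hlt.le)).1
    ((hlength hl).symm.trans (hsum ▸ hlength hl'))
  rw [← Nat.sub_mul, mul_comm _ m] at hdvd
  exact Nat.dvd_of_mul_dvd_mul_left (Nat.pos_of_ne_zero hm) hdvd

theorem crossNumber_eq_card_div {S : Multiset G} {n : ℕ} (hS : ∀ x ∈ S, addOrderOf x = n) :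
    crossNumber S = card S / n := by
  rw [crossNumber, map_congr rfl fun x hx => by rw [hS x hx], map_const', sum_replicate,
    nsmul_eq_mul, div_eq_mul_inv]

variable {ι : Type*} [Fintype ι] {e : ι → G} {S U : Multiset G}

theorem IndepMod.dvd_sub (he : IndepMod p e) {z w : ι → ℤ} (h : ∑ i, z i • e i = ∑ i, w i • e i)
    (i : ι) : (p : ℤ) ∣ z i - w i :=
  he (fun i => z i - w i) (by simp [sub_smul, h]) i

theorem IndepMod.injective (he : IndepMod p e) (hp : p ≠ 1) : Function.Injective e := by
  classical
  intro i j hij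
  by_contra hne
  have := he.dvd_sub (z := Pi.single i 1) (w := Pi.single j 1) (by simp [Pi.single_apply, hij]) i
  simp [hne, Int.natCast_dvd, hp] at this

theorem IndepMod.ne_zero (he : IndepMod p e) (hp : p ≠ 1) (i : ι) : e i ≠ 0 := by
  classical
  intro h
  have := he (Pi.single i 1) (by simp [Pi.single_apply, h]) i
  simp [Int.natCast_dvd, hp] at this

theorem IndepMod.sum_ne_zero [Nonempty ι] (he : IndepMod p e) (hp : p ≠ 1) : ∑ i, e i ≠ 0 := by
  intro h
  have := he (fun _ => 1) (by simpa using h) (Classical.arbitrary ι)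
  simp [Int.natCast_dvd, hp] at this

theorem IndepMod.sum_notMem_range [Nontrivial ι] (he : IndepMod p e) (hp : p ≠ 1) :
    ∑ i, e i ∉ Set.range e := by
  classical
  rintro ⟨i, hi⟩
  obtain ⟨j, hj⟩ := exists_ne i
  have := he.dvd_sub (z := Pi.single i 1) (w := fun _ => 1) (by simp [Pi.single_apply, hi]) j
  simp [hj, Int.natCast_dvd, hp] at this

/-- The set `{e₁, …, e_r, e₁ + ⋯ + e_r}`. For elements of prime order `p` that are independent
modulo `p`, its minimal distance is at least `r - 1`. -/
def rangeWithSum (e : ι → G) : Set G :=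
  insert (∑ i, e i) (Set.range e)

theorem mem_rangeWithSum (i : ι) : e i ∈ rangeWithSum e :=
  .inr ⟨i, rfl⟩

theorem sum_mem_rangeWithSum : ∑ i, e i ∈ rangeWithSum e :=
  .inl rfl

theorem forall_mem_rangeWithSum {P : G → Prop} :
    (∀ x ∈ rangeWithSum e, P x) ↔ P (∑ i, e i) ∧ ∀ i, P (e i) := by
  rw [rangeWithSum, Set.forall_mem_insert, Set.forall_mem_range]

theorem nsmul_eq_zero_of_mem_rangeWithSum (hpe : ∀ i, p • e i = 0) :
    ∀ x ∈ rangeWithSum e, p • x = 0 :=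
  forall_mem_rangeWithSum.2 ⟨by simp [Finset.smul_sum, hpe], hpe⟩

theorem IndepMod.addOrderOf_eq [Nonempty ι] (he : IndepMod p e) (hp : p.Prime)
    (hpe : ∀ i, p • e i = 0) : ∀ x ∈ rangeWithSum e, addOrderOf x = p := fun x hx => by
  have : Fact p.Prime := ⟨hp⟩
  have hx0 : ∀ x ∈ rangeWithSum e, x ≠ 0 :=
    forall_mem_rangeWithSum.2 ⟨he.sum_ne_zero hp.ne_one, he.ne_zero hp.ne_one⟩
  exact addOrderOf_eq_prime (nsmul_eq_zero_of_mem_rangeWithSum hpe x hx) (hx0 x hx)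

section Counting

variable [DecidableEq G]

theorem eq_of_forall_count_rangeWithSum_eq {T : Multiset G} (hS : ∀ x ∈ S, x ∈ rangeWithSum e)
    (hT : ∀ x ∈ T, x ∈ rangeWithSum e)
    (h : ∀ x ∈ rangeWithSum e, S.count x = T.count x) : S = T := by
  ext x
  by_cases hx : x ∈ rangeWithSum e
  · exact h x hx
  · rw [count_eq_zero_of_notMem (mt (hS x) hx), count_eq_zero_of_notMem (mt (hT x) hx)]

variable [Nontrivial ι]

theorem IndepMod.sum_map_eq {M : Type*} [AddCommMonoid M] (he : IndepMod p e) (hp : p ≠ 1)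
    (hS : ∀ x ∈ S, x ∈ rangeWithSum e) (f : G → M) :
    (S.map f).sum = S.count (∑ i, e i) • f (∑ i, e i) + ∑ i, S.count (e i) • f (e i) := by
  set F : Finset G := insert (∑ i, e i) (Finset.univ.image e)
  have hSF : S.toFinset ⊆ F := fun x hx => by
    simpa [F, rangeWithSum] using hS x (mem_toFinset.1 hx)
  rw [Finset.sum_multiset_map_count, Finset.sum_subset hSF, Finset.sum_insert, Finset.sum_image]
  · exact fun i _ j _ h => he.injective hp h
  · simpa using he.sum_notMem_range hp
  · intro x _ hx
    rw [count_eq_zero_of_notMem (mt mem_toFinset.2 hx), zero_smul]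

theorem IndepMod.dvd_count_add_count (he : IndepMod p e) (hp : p ≠ 1)
    (hS : IsZeroSumSeq (rangeWithSum e) S) (i : ι) :
    p ∣ S.count (e i) + S.count (∑ i, e i) := by
  have hsum := he.sum_map_eq hp hS.1 id
  rw [map_id, hS.2, id, Finset.smul_sum, ← Finset.sum_add_distrib] at hsum
  have := he (fun i => (S.count (e i) + S.count (∑ i, e i) : ℕ))
    (by rw [hsum]; exact Finset.sum_congr rfl fun i _ => by simp [add_smul, add_comm]) i
  exact_mod_cast this

theorem IndepMod.count_add_count_eq (he : IndepMod p e) (hp : p ≠ 1)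
    (hS : IsZeroSumSeq (rangeWithSum e) S) (hS0 : S ≠ 0) (hlt : ∀ x ∈ rangeWithSum e, S.count x < p)
    (i : ι) : S.count (e i) + S.count (∑ i, e i) = p := by
  have hltsum := hlt _ (sum_mem_rangeWithSum (e := e))
  have hlti (i : ι) := hlt _ (mem_rangeWithSum (e := e) i)
  have hpos : 0 < S.count (∑ i, e i) := by
    refine Nat.pos_of_ne_zero fun h0 => hS0 ?_
    refine eq_of_forall_count_rangeWithSum_eq hS.1 (fun x hx => absurd hx (notMem_zero x)) ?_
    refine forall_mem_rangeWithSum.2 ⟨by simpa using h0, fun i => ?_⟩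
    have := he.dvd_count_add_count hp hS i
    rw [h0, add_zero] at this
    rw [Nat.eq_zero_of_dvd_of_lt this (hlti i), count_zero]
  refine Nat.eq_of_dvd_of_lt_two_mul (by omega) (he.dvd_count_add_count hp hS i) ?_
  have := hlti i
  omega

-- Either `U` is one of the trivial atoms `x ^ p`, or all its multiplicities are less than `p`, and
-- then each `e i` and the sum occur together `p` times, so that the left-hand side is `p * r`.
theorem IndepMod.card_add_count_modEq (he : IndepMod p e) (hp : 1 < p) (hpe : ∀ i, p • e i = 0)
    (hU : IsAtomSeq (rangeWithSum e) U) :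
    card U + (Fintype.card ι - 1) * U.count (∑ i, e i) ≡ p [MOD p * (Fintype.card ι - 1)] := by
  obtain ⟨d, hd⟩ : ∃ d, Fintype.card ι = d + 1 :=
    ⟨_, (Nat.succ_pred_eq_of_pos Fintype.card_pos).symm⟩
  rw [hd, Nat.add_sub_cancel]
  by_cases hlt : ∀ x ∈ rangeWithSum e, U.count x < p
  · have hcount := he.count_add_count_eq hp.ne' hU.1 hU.2.1 hlt
    have hcard := he.sum_map_eq hp.ne' hU.1.1 fun _ => 1
    have hsum : ∑ i, U.count (e i) + (d + 1) * U.count (∑ i, e i) = (d + 1) * p := by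
      simpa [Finset.sum_add_distrib, hd] using
        Finset.sum_congr (s₁ := Finset.univ) rfl fun i _ => hcount i
    have htotal : card U + d * U.count (∑ i, e i) = p + p * d := by
      simp only [map_const', sum_replicate, smul_eq_mul, mul_one] at hcard
      linarith
    rw [htotal]
    exact Nat.add_modEq_right
  · push Not at hlt
    obtain ⟨x, hx, hle⟩ := hlt
    have hzero : IsZeroSumSeq (rangeWithSum e) (replicate p x) :=
      ⟨fun y hy => eq_of_mem_replicate hy ▸ hx, by
        rw [sum_replicate, nsmul_eq_zero_of_mem_rangeWithSum hpe x hx]⟩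
    have hU' : replicate p x = U := hU.eq_of_le (le_count_iff_replicate_le.1 hle) hzero
      fun h => by simpa [(zero_lt_one.trans hp).ne'] using congrArg card h
    rw [← hU', card_replicate, count_replicate]
    split_ifs
    · rw [mul_comm]
      exact Nat.add_modEq_right
    · rfl

end Counting

variable [Nontrivial ι]

theorem IndepMod.card_sub_one_dvd_of_mem_deltaSet (he : IndepMod p e) (hp : 1 < p)
    (hpe : ∀ i, p • e i = 0) : ∀ δ ∈ DeltaSet (rangeWithSum e), Fintype.card ι - 1 ∣ δ := by
  classical
  exact dvd_of_mem_deltaSet (cardHom + (Fintype.card ι - 1) • countAddMonoidHom (∑ i, e i))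
    (zero_lt_one.trans hp).ne' fun _ hU => he.card_add_count_modEq hp hpe hU

theorem IndepMod.isAtomSeq_sum_cons (he : IndepMod p e) (hp : 1 < p) (hpe : ∀ i, p • e i = 0) :
    IsAtomSeq (rangeWithSum e) ((∑ i, e i) ::ₘ (p - 1) • Finset.univ.val.map e) := by
  classical
  set W := (∑ i, e i) ::ₘ (p - 1) • Finset.univ.val.map e
  have hcount_sum : W.count (∑ i, e i) = 1 := by
    have : ∑ i, e i ∉ Finset.univ.val.map e := by simpa using he.sum_notMem_range hp.ne'
    rw [count_cons_self, count_nsmul, count_eq_zero_of_notMem this, mul_zero]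
  have hcount (i : ι) : W.count (e i) = p - 1 := by
    have hne : e i ≠ ∑ i, e i := fun h => he.sum_notMem_range hp.ne' ⟨i, h⟩
    rw [count_cons_of_ne hne, count_nsmul, count_map_eq_count' e _ (he.injective hp.ne'),
      count_eq_one_of_mem Finset.univ.nodup (Finset.mem_univ i), mul_one]
  have hmem : ∀ x ∈ W, x ∈ rangeWithSum e := by
    refine forall_mem_cons.2 ⟨sum_mem_rangeWithSum, fun x hx => ?_⟩
    obtain ⟨i, -, rfl⟩ := mem_map.1 (mem_of_mem_nsmul hx)
    exact mem_rangeWithSum i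
  have hsum : W.sum = 0 := by
    have : W.sum = (1 + (p - 1)) • ∑ i, e i := by rw [sum_cons, sum_nsmul, add_smul, one_smul]; rfl
    rw [this, Nat.add_sub_cancel' hp.le]
    exact nsmul_eq_zero_of_mem_rangeWithSum hpe _ sum_mem_rangeWithSum
  refine isAtomSeq_iff_forall_le.2 ⟨⟨hmem, hsum⟩, cons_ne_zero, fun A hAW hA hA0 => ?_⟩
  have hle_sum := hcount_sum ▸ count_le_of_le (∑ i, e i) hAW
  have hle (i : ι) := hcount i ▸ count_le_of_le (e i) hAW
  have hA' := he.count_add_count_eq hp.ne' hA hA0 (forall_mem_rangeWithSum.2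
    ⟨hle_sum.trans_lt hp, fun i => (hle i).trans_lt (by omega)⟩)
  refine eq_of_forall_count_rangeWithSum_eq hA.1 hmem (forall_mem_rangeWithSum.2 ⟨?_, fun i => ?_⟩)
  · have := hA' (Classical.arbitrary ι)
    have := hle (Classical.arbitrary ι)
    omega
  · have := hA' i
    have := hle i
    rw [hcount i]
    omega

theorem IndepMod.not_isHalfFactorialSet_rangeWithSum (he : IndepMod p e)
    (hp : p.Prime) (hpe : ∀ i, p • e i = 0) (hG : AddMonoid.ExponentExists G) :
    ¬ IsHalfFactorialSet (rangeWithSum e) := by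
  classical
  intro h
  have hatom := he.isAtomSeq_sum_cons hp.one_lt hpe
  have hcross := (isHalfFactorialSet_iff_crossNumber_eq_one hG).1 h _ hatom
  rw [crossNumber_eq_card_div fun x hx => he.addOrderOf_eq hp hpe x (hatom.1.1 x hx),
    div_eq_one_iff_eq (mod_cast hp.ne_zero)] at hcross
  have hcard : (p - 1) * Fintype.card ι + 1 = p := by
    simpa using (mod_cast hcross : card ((∑ i, e i) ::ₘ (p - 1) • Finset.univ.val.map e) = p)
  have hp1 : 0 < p - 1 := Nat.sub_pos_of_lt hp.one_lt
  have := Nat.mul_lt_mul_of_pos_left (Fintype.one_lt_card (α := ι)) hp1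
  omega

theorem bddAbove_deltaStar [Finite G] : BddAbove (DeltaStar G) := by
  refine ((Set.finite_range fun E : Set G => sInf (DeltaSet E)).subset ?_).bddAbove
  rintro _ ⟨E, -, rfl⟩
  exact ⟨E, rfl⟩

theorem rankG_sub_one_le_sSup_deltaStar [Finite G] (h : 2 ≤ rankG G) :
    rankG G - 1 ≤ sSup (DeltaStar G) := by
  obtain ⟨p, hp, hpG⟩ := exists_prime_pRank_eq_rankG (G := G)
  obtain ⟨e, he, hpe⟩ := exists_indepMod_pRank (G := G) hp
  have : Nontrivial (Fin (pRank G p)) := Fin.nontrivial_iff_two_le.2 (hpG ▸ h)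
  have hne : (DeltaSet (rangeWithSum e)).Nonempty := Set.nonempty_iff_ne_empty.2
    (he.not_isHalfFactorialSet_rangeWithSum hp hpe .of_finite)
  obtain ⟨_, -, -, _, -, _, -, hlt, hd, -⟩ := Nat.sInf_mem hne
  have hdvd := he.card_sub_one_dvd_of_mem_deltaSet hp.one_lt hpe _ (Nat.sInf_mem hne)
  rw [Fintype.card_fin] at hdvd
  rw [hpG]
  exact (Nat.le_of_dvd (by omega) hdvd).trans (le_csSup bddAbove_deltaStar ⟨_, hne, rfl⟩)

end ExtremalSet

/-- If `r(G) ≥ exp(G)` and `G₀` is a minimal non-half-factorial set with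
`min Δ(G₀) = max Δ*(G)`, then `G₀` is an LCN-set, `|G₀| = r(G) + 1`, and
`h ∉ ⟨G₀ \ {h, h'}⟩` for all `h ∈ G₀` and `h' ∈ G₀ \ {h}`. -/
theorem stmt_18 {G : Type*} [AddCommGroup G] [Fintype G]
    (hr : AddMonoid.exponent G ≤ rankG G) (G₀ : Set G)
    (hmin : IsMinNonHalfFactorial G₀)
    (hmax : sInf (DeltaSet G₀) = sSup (DeltaStar G)) :
    IsLCNSet G₀ ∧ G₀.ncard = rankG G + 1 ∧
    ∀ h ∈ G₀, ∀ h' ∈ G₀ \ {h}, h ∉ AddSubgroup.closure (G₀ \ {h, h'}) := by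
  have hG : AddMonoid.ExponentExists G := .of_finite
  have hdist : rankG G ≤ sInf (DeltaSet G₀) + 1 := by
    have := rankG_sub_one_le_sSup_deltaStar (two_le_rankG_of_exponent_le hr)
    omega
  have hexp := hr.trans hdist
  have hG₀ : ¬ IsHalfFactorialSet G₀ := hmin.1.ne_empty
  obtain ⟨U, hU, hU1⟩ := exists_isAtomSeq_crossNumber_ne_one hG hG₀
  have hproper : ∀ g ∈ G₀, relationLattice (G₀ \ {g}) ≤ crossOneLattice G₀ := fun g hg =>
    IsHalfFactorialSet.relationLattice_le_crossOneLattice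
      (hmin.2 _ (Set.sdiff_singleton_ssubset.2 hg)) hG Set.sdiff_subset
  have hnot : ¬ relationLattice G₀ ≤ crossOneLattice G₀ := fun hle =>
    hU.countVector_notMem_crossOneLattice hU1 hG hexp
      (hle (countVector_mem_relationLattice.2 hU.1))
  refine ⟨isLCNSet_of_exponent_le hG hexp, ?_, fun h hh h' hh' hmem => ?_⟩
  · have hlower := sInf_deltaSet_add_two_le_ncard hG hexp G₀.toFinite hG₀
    have hupper := ncard_le_rankG_add_one hproper hnot
    omega
  · exact hnot (relationLattice_le_of_mem_closure hproper hh hh'.1 hh'.2 hmem)
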